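/- Let A ∈ SL(2,ℤ) have entries a, b (top row) and c, d (bottom row) with c ≠ 0, let q_1,…,q_k be integers with q_i ≥ 2 for i ∈ {2,…,k} and a/c = [[q_1,…,q_k]], and let m = ⌈d/c⌉. Then A = ε·M(q_1,…,q_k,m,0) for some ε ∈ {1,−1}. -/

import Mathlib

/-- The continuant matrix `M(c)` for an integer `c`. -/
def M (c : ℤ) : Matrix (Fin 2) (Fin 2) ℤ := !![c, -1; 1, 0]

/-- `M(c₁,…,cₙ) := M(c₁)·…·M(cₙ)`. -/
def Mseq (l : List ℤ) : Matrix (Fin 2) (Fin 2) ℤ := (l.map M).prod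

/-- The negative continued fraction `[[q₁,…,q_k]]` of a list of integers,
defined by `[[q_k]] = q_k` and `[[q_i,…,q_k]] = q_i − 1/[[q_{i+1},…,q_k]]`. -/
def ncf : List ℤ → ℚ
  | [] => 0
  | [q] => (q : ℚ)
  | q :: l => (q : ℚ) - 1 / ncf l

/-!
Put `P = M(q₁,…,q_k)`. The condition `a/c = [[q₁,…,q_k]]` says that the first columns of `A` and
`P` are proportional, so `P⁻¹A` is an upper triangular element of `SL(2,ℤ)`. Such an element is
`±M(n,0)` for some `n`, whence `A = ±M(q₁,…,q_k,n,0)`. Comparing bottom rows gives `d/c = n + y/x`,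
where `(x, y)` is the bottom row of `P`, that is, the top row of `M(q₂,…,q_k)`. Since `M(q)` with
`q ≥ 2` maps the cone `{(u, v) | 0 ≤ u, v ≤ u}` into itself without decreasing `u`, applying
`M(q₂,…,q_k)` to `(1, 0)`, `(1, 1)` and `(0, -1)` gives `x > 0` and `-x < y ≤ 0`; hence
`n = ⌈d/c⌉`.
-/

open Matrix

theorem Mseq_cons (q : ℤ) (l : List ℤ) : Mseq (q :: l) = M q * Mseq l := by
  simp [Mseq]

theorem Mseq_append (l l' : List ℤ) : Mseq (l ++ l') = Mseq l * Mseq l' := by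
  simp [Mseq]

theorem M_mulVec (q : ℤ) (v : Fin 2 → ℤ) : M q *ᵥ v = ![q * v 0 - v 1, v 0] := by
  ext i
  fin_cases i <;> simp [M, mulVec, dotProduct, Fin.sum_univ_two, sub_eq_add_neg]

theorem Mseq_cons_zero_apply (q : ℤ) (l : List ℤ) (j : Fin 2) :
    Mseq (q :: l) 0 j = q * Mseq l 0 j - Mseq l 1 j := by
  simp [Mseq_cons, M, mul_apply, Fin.sum_univ_two, sub_eq_add_neg]

theorem Mseq_cons_one_apply (q : ℤ) (l : List ℤ) (j : Fin 2) :
    Mseq (q :: l) 1 j = Mseq l 0 j := by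
  simp [Mseq_cons, M, mul_apply, Fin.sum_univ_two]

theorem Mseq_pair_zero (n : ℤ) : Mseq [n, 0] = !![-1, -n; 0, -1] := by
  simp [Mseq, M]

theorem Mseq_append_pair_apply_zero (l : List ℤ) (n : ℤ) (i : Fin 2) :
    Mseq (l ++ [n, 0]) i 0 = -Mseq l i 0 := by
  simp [Mseq_append, Mseq_pair_zero, mul_apply, Fin.sum_univ_two]

theorem Mseq_append_pair_apply_one (l : List ℤ) (n : ℤ) (i : Fin 2) :
    Mseq (l ++ [n, 0]) i 1 = -(n * Mseq l i 0 + Mseq l i 1) := by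
  simp only [Mseq_append, Mseq_pair_zero, mul_apply, Fin.sum_univ_two, of_apply, cons_val_zero,
    cons_val_one, cons_val_fin_one]
  ring

theorem det_Mseq (l : List ℤ) : (Mseq l).det = 1 := by
  induction l with
  | nil => simp [Mseq]
  | cons q l ih =>
    rw [Mseq_cons, det_mul, ih, mul_one]
    simp [M, det_fin_two]

theorem le_Mseq_mulVec_zero_and_Mseq_mulVec_one_le {l : List ℤ} (hl : ∀ t ∈ l, 2 ≤ t)
    {v : Fin 2 → ℤ} (h0 : 0 ≤ v 0) (h1 : v 1 ≤ v 0) :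
    v 0 ≤ (Mseq l *ᵥ v) 0 ∧ (Mseq l *ᵥ v) 1 ≤ (Mseq l *ᵥ v) 0 := by
  induction l with
  | nil => simpa [Mseq] using h1
  | cons q l ih =>
    obtain ⟨hq, hl⟩ := List.forall_mem_cons.mp hl
    obtain ⟨hv, hle⟩ := ih hl
    rw [Mseq_cons, ← mulVec_mulVec, M_mulVec]
    simp only [cons_val_zero, cons_val_one]
    have hdouble : 2 * (Mseq l *ᵥ v) 0 ≤ q * (Mseq l *ᵥ v) 0 :=
      mul_le_mul_of_nonneg_right hq (h0.trans hv)
    constructor <;> linarith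

theorem le_Mseq_zero_zero_mul_add {l : List ℤ} (hl : ∀ t ∈ l, 2 ≤ t) {x y : ℤ}
    (hx : 0 ≤ x) (hyx : y ≤ x) : x ≤ Mseq l 0 0 * x + Mseq l 0 1 * y := by
  simpa [mulVec, dotProduct, Fin.sum_univ_two] using
    (le_Mseq_mulVec_zero_and_Mseq_mulVec_one_le hl (v := ![x, y]) hx hyx).1

theorem Mseq_zero_zero_pos {l : List ℤ} (hl : ∀ t ∈ l, 2 ≤ t) : 0 < Mseq l 0 0 := by
  linarith [le_Mseq_zero_zero_mul_add hl (x := 1) (y := 0) (by simp) (by simp)]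

theorem Mseq_zero_one_nonpos {l : List ℤ} (hl : ∀ t ∈ l, 2 ≤ t) : Mseq l 0 1 ≤ 0 := by
  linarith [le_Mseq_zero_zero_mul_add hl (x := 0) (y := -1) (by simp) (by simp)]

theorem neg_Mseq_zero_zero_lt_Mseq_zero_one {l : List ℤ} (hl : ∀ t ∈ l, 2 ≤ t) :
    -Mseq l 0 0 < Mseq l 0 1 := by
  linarith [le_Mseq_zero_zero_mul_add hl (x := 1) (y := 1) (by simp) (by simp)]

theorem ncf_cons_eq_div {l : List ℤ} (hl : ∀ t ∈ l, 2 ≤ t) (q : ℤ) :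
    ncf (q :: l) = Mseq (q :: l) 0 0 / Mseq (q :: l) 1 0 := by
  induction l generalizing q with
  | nil => simp [ncf, Mseq, M]
  | cons r l ih =>
    have hne : (Mseq (r :: l) 0 0 : ℚ) ≠ 0 := by exact_mod_cast (Mseq_zero_zero_pos hl).ne'
    calc ncf (q :: r :: l) = q - 1 / ncf (r :: l) := rfl
      _ = q - Mseq (r :: l) 1 0 / Mseq (r :: l) 0 0 := by
        rw [ih (List.forall_mem_cons.mp hl).2, one_div_div]
      _ = Mseq (q :: r :: l) 0 0 / Mseq (q :: r :: l) 1 0 := by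
        rw [Mseq_cons_zero_apply q, Mseq_cons_one_apply q]
        push_cast
        field_simp

theorem mul_Mseq_one_zero_eq_of_ncf_eq_div {q a c : ℤ} {l : List ℤ} (hl : ∀ t ∈ l, 2 ≤ t)
    (hc : c ≠ 0) (hncf : ncf (q :: l) = (a : ℚ) / c) :
    a * Mseq (q :: l) 1 0 = Mseq (q :: l) 0 0 * c := by
  have hP : (Mseq (q :: l) 1 0 : ℚ) ≠ 0 := by
    rw [Mseq_cons_one_apply]
    exact_mod_cast (Mseq_zero_zero_pos hl).ne'
  rw [ncf_cons_eq_div hl, div_eq_div_iff hP (Int.cast_ne_zero.mpr hc)] at hncf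
  exact_mod_cast hncf.symm

theorem exists_eq_smul_Mseq_pair_zero {C : Matrix (Fin 2) (Fin 2) ℤ} (hdet : C.det = 1)
    (hC : C 1 0 = 0) : ∃ ε n : ℤ, (ε = 1 ∨ ε = -1) ∧ C = ε • Mseq [n, 0] := by
  have hdiag : C 0 0 * C 1 1 = 1 := by simpa [det_fin_two, hC] using hdet
  rw [eta_fin_two C, hC]
  rcases Int.eq_one_or_neg_one_of_mul_eq_one' hdiag with ⟨h0, h1⟩ | ⟨h0, h1⟩
  · exact ⟨-1, C 0 1, .inr rfl, by simp [Mseq_pair_zero, h0, h1]⟩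
  · exact ⟨1, -C 0 1, .inl rfl, by simp [Mseq_pair_zero, h0, h1]⟩

theorem exists_eq_smul_mul_Mseq_pair_zero {A P : Matrix (Fin 2) (Fin 2) ℤ} (hA : A.det = 1)
    (hP : P.det = 1) (hcol : A 0 0 * P 1 0 = P 0 0 * A 1 0) :
    ∃ ε n : ℤ, (ε = 1 ∨ ε = -1) ∧ A = ε • (P * Mseq [n, 0]) := by
  have hdet : (P.adjugate * A).det = 1 := by simp [det_adjugate, hA, hP]
  have hzero : (P.adjugate * A) 1 0 = 0 := by
    simp only [adjugate_fin_two, mul_apply, Fin.sum_univ_two, of_apply, cons_val_zero,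
      cons_val_one]
    linear_combination -hcol
  obtain ⟨ε, n, hε, h⟩ := exists_eq_smul_Mseq_pair_zero hdet hzero
  refine ⟨ε, n, hε, ?_⟩
  rw [← mul_smul_comm, ← h, ← Matrix.mul_assoc, mul_adjugate, hP, one_smul, Matrix.one_mul]

theorem ceil_Mseq_append_one_one_div_one_zero {l : List ℤ} (hl : ∀ t ∈ l, 2 ≤ t) (q n : ℤ) :
    ⌈(Mseq (q :: l ++ [n, 0]) 1 1 : ℚ) / Mseq (q :: l ++ [n, 0]) 1 0⌉ = n := by
  have hpos : (0 : ℚ) < Mseq l 0 0 := by exact_mod_cast Mseq_zero_zero_pos hl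
  have hle : (Mseq l 0 1 : ℚ) ≤ 0 := by exact_mod_cast Mseq_zero_one_nonpos hl
  have hlt : -(Mseq l 0 0 : ℚ) < Mseq l 0 1 := by
    exact_mod_cast neg_Mseq_zero_zero_lt_Mseq_zero_one hl
  have hratio : (Mseq (q :: l ++ [n, 0]) 1 1 : ℚ) / Mseq (q :: l ++ [n, 0]) 1 0 =
      n + Mseq l 0 1 / Mseq l 0 0 := by
    rw [Mseq_append_pair_apply_one, Mseq_append_pair_apply_zero, Mseq_cons_one_apply,
      Mseq_cons_one_apply]
    push_cast
    rw [neg_div_neg_eq, add_div, mul_div_cancel_right₀ _ hpos.ne']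
  have hgt : -1 < (Mseq l 0 1 : ℚ) / Mseq l 0 0 := by rw [lt_div_iff₀ hpos]; linarith
  have hnonpos : (Mseq l 0 1 : ℚ) / Mseq l 0 0 ≤ 0 := div_nonpos_of_nonpos_of_nonneg hle hpos.le
  rw [hratio, Int.ceil_eq_iff]
  constructor <;> linarith

/-- Let `A = !![a, b; c, d] ∈ SL(2,ℤ)` with `c ≠ 0`, let `q₁,…,q_k` be integers with
`qᵢ ≥ 2` for `i ∈ {2,…,k}` and `a/c = [[q₁,…,q_k]]`, and let `m = ⌈d/c⌉`.
Then `A = ε·M(q₁,…,q_k,m,0)` for some `ε ∈ {1,−1}`. -/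
theorem presentation_exists (a b c d : ℤ) (hdet : a * d - b * c = 1) (hc : c ≠ 0)
    (q : List ℤ) (hq : q ≠ [])
    (hq2 : ∀ i, 1 ≤ i → i < q.length → 2 ≤ q.getD i 0)
    (hncf : ncf q = (a : ℚ) / (c : ℚ))
    (m : ℤ) (hm : m = ⌈(d : ℚ) / (c : ℚ)⌉) :
    ∃ ε : ℤ, (ε = 1 ∨ ε = -1) ∧ !![a, b; c, d] = ε • Mseq (q ++ [m, 0]) := by
  obtain ⟨q₁, l, rfl⟩ := List.exists_cons_of_ne_nil hq
  have hl : ∀ t ∈ l, 2 ≤ t := by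
    intro t ht
    obtain ⟨i, hi, rfl⟩ := List.getElem_of_mem ht
    simpa [hi] using hq2 (i + 1) (by simp) (by simpa using hi)
  obtain ⟨ε, n, hε, hA⟩ := exists_eq_smul_mul_Mseq_pair_zero
    (A := !![a, b; c, d]) (by simpa [det_fin_two] using hdet) (det_Mseq (q₁ :: l))
    (mul_Mseq_one_zero_eq_of_ncf_eq_div hl hc hncf)
  rw [← Mseq_append] at hA
  have hmn : m = n := by
    have hc' : c = ε * Mseq (q₁ :: l ++ [n, 0]) 1 0 := congr_fun₂ hA 1 0
    have hd' : d = ε * Mseq (q₁ :: l ++ [n, 0]) 1 1 := congr_fun₂ hA 1 1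
    have hε0 : (ε : ℚ) ≠ 0 := by rcases hε with rfl | rfl <;> norm_num
    rw [hm, hc', hd', Int.cast_mul, Int.cast_mul, mul_div_mul_left _ _ hε0,
      ceil_Mseq_append_one_one_div_one_zero hl]
  exact ⟨ε, hε, hmn ▸ hA⟩
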